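/- For the uniform probability distribution P on the boundary L of the regular hexagon with vertices (0,0), (1,0), (3/2,√3/2), (1,√3), (0,√3), (−1/2,√3/2), the set {(13/12, √3/2), (−1/12, √3/2)} forms an optimal set of two-means, and the quantization error for two-means is V₂(P) = 71/144. -/

import Mathlib

open MeasureTheory Real Filter
open scoped ENNReal

noncomputable section

/-- The plane `ℝ²` with the Euclidean norm. -/
abbrev E2 : Type := EuclideanSpace ℝ (Fin 2)

/-- The point `(a, b)` of `ℝ²`. -/
def pt (a b : ℝ) : E2 := !₂[a, b]

/-- The `n`th quantization error of a Borel probability measure `P` on `ℝ²`: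
the infimum of `∫ min_{a ∈ α} ‖x - a‖² dP(x)` over all (nonempty) finite sets
`α ⊆ ℝ²` with at most `n` elements. -/
def quantErr (P : Measure E2) (n : ℕ) : ℝ :=
  sInf {v : ℝ | ∃ α : Set E2, α.Finite ∧ α.Nonempty ∧ α.ncard ≤ n ∧
    v = ∫ x, sInf ((fun a => ‖x - a‖ ^ 2) '' α) ∂P}

/-- `α` is an optimal set of `n`-means for `P` if it attains the `n`th
quantization error. -/
def IsOptimalSet (P : Measure E2) (n : ℕ) (α : Set E2) : Prop :=
  α.Finite ∧ α.Nonempty ∧ α.ncard ≤ n ∧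
    (∫ x, sInf ((fun a => ‖x - a‖ ^ 2) '' α) ∂P) = quantErr P n

/-- The boundary `L` of the regular hexagon with vertices `O(0,0)`, `A₁(1,0)`,
`A₂(3/2,√3/2)`, `A₃(1,√3)`, `A₄(0,√3)`, `A₅(-1/2,√3/2)`. -/
def hexL : Set E2 :=
  segment ℝ (pt 0 0) (pt 1 0) ∪ segment ℝ (pt 1 0) (pt (3/2) (Real.sqrt 3/2)) ∪
  segment ℝ (pt (3/2) (Real.sqrt 3/2)) (pt 1 (Real.sqrt 3)) ∪
  segment ℝ (pt 1 (Real.sqrt 3)) (pt 0 (Real.sqrt 3)) ∪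
  segment ℝ (pt 0 (Real.sqrt 3)) (pt (-(1/2)) (Real.sqrt 3/2)) ∪
  segment ℝ (pt (-(1/2)) (Real.sqrt 3/2)) (pt 0 0)

/-- The uniform probability distribution on `hexL`: density `1/6` with respect
to the one-dimensional Hausdorff (arc-length) measure on `hexL`. -/
def hexP : Measure E2 := (6 : ℝ≥0∞)⁻¹ • (μH[1] : Measure E2).restrict hexL

/-!
Write a pair of points as `c + m ± r • e` with `c` the center of the hexagon and `e` a unit vector.
Averaging the cost over `x` and its mirror image in `c` shows that the pair costs
`∫ ‖x - c‖² + ‖m‖² + r² - 2 r M(|⟪m, e⟫|)`, where `M(t) = ∫ max |⟪x - c, e⟫| t`.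
Minimizing over `r`, and using `|⟪m, e⟫| ≤ ‖m‖`, it suffices that `M(t)² ≤ t² + (7/12)²` for all
`e` and `t ≥ 0`: then every pair costs at least `5/6 - (7/12)² = 71/144`.

Up to the symmetries of the hexagon, `e` has nonnegative inner products `u, v` with two vertices
(seen from `c`) at angle `2π/3`, and `u² + uv + v² = 3/4`. If `t ≥ u + v` then `M(t) = t`, since no
point of the hexagon projects beyond `t`; otherwise `M(t) ≤ 7/12 + 4/7 t²`, with equality at `t = 0`
when `e` points to a vertex.
-/

open scoped RealInnerProductSpace

section TwoMeans

lemma abs_sub_add_abs_add_eq_two_mul_max (x t : ℝ) : |x - t| + |x + t| = 2 * max |x| |t| := by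
  rcases abs_cases x with hx | hx <;> rcases abs_cases t with ht | ht <;>
  rcases abs_cases (x - t) with hsub | hsub <;> rcases abs_cases (x + t) with hadd | hadd <;>
  rcases max_cases |x| |t| with hmax | hmax <;> linarith

lemma exists_norm_eq_one_and_eq_norm_smul {E : Type*} [NormedAddCommGroup E] [NormedSpace ℝ E]
    [Nontrivial E] (v : E) :
    ∃ e : E, ‖e‖ = 1 ∧ v = ‖v‖ • e := by
  rcases eq_or_ne v 0 with rfl | hv
  · obtain ⟨e, he⟩ := exists_norm_eq E zero_le_one
    exact ⟨e, he, by simp⟩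
  · exact ⟨‖v‖⁻¹ • v, norm_smul_inv_norm hv, by simp [smul_smul, hv]⟩

/-- The quantization cost of the two-point codebook `{a, b}`: the mean squared distance of a
`μ`-distributed point to the nearer of `a` and `b`. -/
def pairDistortion {E : Type*} [NormedAddCommGroup E] [MeasurableSpace E] (μ : Measure E)
    (a b : E) : ℝ :=
  ∫ x, min (‖x - a‖ ^ 2) (‖x - b‖ ^ 2) ∂μ

lemma integrable_min_norm_sub_sq {E : Type*} [NormedAddCommGroup E] [MeasurableSpace E]
    {μ : Measure E} [IsFiniteMeasure μ] (hμ : MemLp id 2 μ) (a b : E) :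
    Integrable (fun x ↦ min (‖x - a‖ ^ 2) (‖x - b‖ ^ 2)) μ :=
  ((hμ.sub (memLp_const a)).integrable_norm_pow two_ne_zero).inf
    ((hμ.sub (memLp_const b)).integrable_norm_pow two_ne_zero)

variable {E : Type*} [NormedAddCommGroup E] [InnerProductSpace ℝ E]

lemma min_norm_sub_sq_norm_add_sq (x v : E) :
    min (‖x - v‖ ^ 2) (‖x + v‖ ^ 2) = ‖x‖ ^ 2 + ‖v‖ ^ 2 - 2 * |⟪x, v⟫| := by
  rw [norm_sub_sq_real, norm_add_sq_real]
  rcases abs_cases ⟪x, v⟫ with h | h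
  · rw [min_eq_left (by linarith)]; linarith
  · rw [min_eq_right (by linarith)]; linarith

lemma min_norm_sub_sq_add_min_norm_neg_sub_sq (x m v : E) :
    min (‖x - (m + v)‖ ^ 2) (‖x - (m - v)‖ ^ 2) + min (‖-x - (m + v)‖ ^ 2) (‖-x - (m - v)‖ ^ 2) =
      2 * (‖x‖ ^ 2 + ‖m‖ ^ 2 + ‖v‖ ^ 2) - 4 * max |⟪x, v⟫| |⟪m, v⟫| := by
  have hsub : ∀ y : E, min (‖y - (m + v)‖ ^ 2) (‖y - (m - v)‖ ^ 2) =
      ‖y - m‖ ^ 2 + ‖v‖ ^ 2 - 2 * |⟪y, v⟫ - ⟪m, v⟫| := fun y ↦ by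
    rw [← sub_sub, ← sub_add, min_norm_sub_sq_norm_add_sq, inner_sub_left]
  have habs : |⟪-x, v⟫ - ⟪m, v⟫| = |⟪x, v⟫ + ⟪m, v⟫| := by
    rw [inner_neg_left, ← abs_neg]; congr 1; ring
  rw [hsub, hsub, habs, norm_sub_sq_real, norm_sub_sq_real, inner_neg_left, norm_neg]
  linear_combination -2 * abs_sub_add_abs_add_eq_two_mul_max ⟪x, v⟫ ⟪m, v⟫

variable [MeasurableSpace E] [BorelSpace E] {μ : Measure E} [IsProbabilityMeasure μ] {c : E}

lemma pairDistortion_add_sub_eq (hμ : MemLp id 2 μ)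
    (hsymm : MeasurePreserving (AffineIsometryEquiv.pointReflection ℝ c) μ μ) (m v : E) :
    pairDistortion μ (c + m + v) (c + m - v) =
      ∫ x, ‖x - c‖ ^ 2 ∂μ + ‖m‖ ^ 2 + ‖v‖ ^ 2 - 2 * ∫ x, max |⟪x - c, v⟫| |⟪m, v⟫| ∂μ := by
  have hcenter : MemLp (fun x ↦ x - c) 2 μ := hμ.sub (memLp_const c)
  have hsq : Integrable (fun x ↦ ‖x - c‖ ^ 2) μ := hcenter.integrable_norm_pow two_ne_zero
  have hquad : Integrable (fun x ↦ ‖x - c‖ ^ 2 + ‖m‖ ^ 2 + ‖v‖ ^ 2) μ := by fun_prop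
  have hmax : Integrable (fun x ↦ max |⟪x - c, v⟫| |⟪m, v⟫|) μ :=
    (((hcenter.integrable one_le_two).inner_const v).abs).sup (integrable_const _)
  set F : E → ℝ := fun x ↦ min (‖x - (c + m + v)‖ ^ 2) (‖x - (c + m - v)‖ ^ 2)
  have hF : Integrable F μ := integrable_min_norm_sub_sq hμ _ _
  have hemb := (AffineIsometryEquiv.pointReflection ℝ c).toHomeomorph.measurableEmbedding
  have hF_reflect : Integrable (fun x ↦ F (AffineIsometryEquiv.pointReflection ℝ c x)) μ :=
    hsymm.integrable_comp_of_integrable hF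
  have hpair : ∀ x, F x + F (AffineIsometryEquiv.pointReflection ℝ c x) =
      2 * (‖x - c‖ ^ 2 + ‖m‖ ^ 2 + ‖v‖ ^ 2) - 4 * max |⟪x - c, v⟫| |⟪m, v⟫| := fun x ↦ by
    have hreflect : AffineIsometryEquiv.pointReflection ℝ c x - c = -(x - c) := by
      simp [AffineIsometryEquiv.pointReflection_apply]
    simp only [F, add_assoc c, add_sub_assoc c, ← sub_sub _ c, hreflect]
    exact min_norm_sub_sq_add_min_norm_neg_sub_sq (x - c) m v
  have htwice : 2 * ∫ x, F x ∂μ = 2 * (∫ x, ‖x - c‖ ^ 2 ∂μ + ‖m‖ ^ 2 + ‖v‖ ^ 2) -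
      4 * ∫ x, max |⟪x - c, v⟫| |⟪m, v⟫| ∂μ := calc
    2 * ∫ x, F x ∂μ = ∫ x, F x ∂μ + ∫ x, F (AffineIsometryEquiv.pointReflection ℝ c x) ∂μ := by
      rw [hsymm.integral_comp hemb, two_mul]
    _ = ∫ x, (2 * (‖x - c‖ ^ 2 + ‖m‖ ^ 2 + ‖v‖ ^ 2) - 4 * max |⟪x - c, v⟫| |⟪m, v⟫|) ∂μ := by
      rw [← integral_add hF hF_reflect]
      simp_rw [hpair]
    _ = _ := by
      rw [integral_sub (hquad.const_mul 2) (hmax.const_mul 4), integral_const_mul,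
        integral_const_mul, integral_add (by fun_prop) (by fun_prop),
        integral_add (by fun_prop) (by fun_prop)]
      simp
  change ∫ x, F x ∂μ = _
  linarith

lemma pairDistortion_add_smul_sub_smul_eq (hμ : MemLp id 2 μ)
    (hsymm : MeasurePreserving (AffineIsometryEquiv.pointReflection ℝ c) μ μ)
    (m : E) {r : ℝ} (hr : 0 ≤ r) {e : E} (he : ‖e‖ = 1) :
    pairDistortion μ (c + m + r • e) (c + m - r • e) =
      ∫ x, ‖x - c‖ ^ 2 ∂μ + ‖m‖ ^ 2 + r ^ 2 - 2 * (r * ∫ x, max |⟪x - c, e⟫| |⟪m, e⟫| ∂μ) := by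
  rw [pairDistortion_add_sub_eq hμ hsymm, norm_smul, he, Real.norm_of_nonneg hr, mul_one,
    ← integral_const_mul r]
  congr 3 with x
  rw [mul_max_of_nonneg _ _ hr, real_inner_smul_right, real_inner_smul_right, abs_mul, abs_mul,
    abs_of_nonneg hr]

lemma integral_norm_sub_sq_sub_le_pairDistortion [Nontrivial E] (hμ : MemLp id 2 μ)
    (hsymm : MeasurePreserving (AffineIsometryEquiv.pointReflection ℝ c) μ μ) {K : ℝ}
    (hK : ∀ e : E, ‖e‖ = 1 → ∀ t : ℝ, 0 ≤ t → (∫ x, max |⟪x - c, e⟫| t ∂μ) ^ 2 ≤ t ^ 2 + K)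
    (a b : E) :
    ∫ x, ‖x - c‖ ^ 2 ∂μ - K ≤ pairDistortion μ a b := by
  obtain ⟨e, he, hv⟩ := exists_norm_eq_one_and_eq_norm_smul ((1 / 2 : ℝ) • (a - b))
  set r := ‖(1 / 2 : ℝ) • (a - b)‖
  set m := (1 / 2 : ℝ) • (a + b) - c with hm
  have ha : a = c + m + r • e := by rw [hm, ← hv]; module
  have hb : b = c + m - r • e := by rw [hm, ← hv]; module
  have hinner : |⟪m, e⟫| ≤ ‖m‖ := by simpa [he] using abs_real_inner_le_norm m e
  have hmean := hK e he |⟪m, e⟫| (abs_nonneg _)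
  rw [ha, hb, pairDistortion_add_smul_sub_smul_eq hμ hsymm m (norm_nonneg _) he]
  nlinarith [sq_nonneg (r - ∫ x, max |⟪x - c, e⟫| |⟪m, e⟫| ∂μ),
    pow_le_pow_left₀ (abs_nonneg _) hinner 2]

end TwoMeans

section Polygon

open AffineMap

variable {E : Type*} [NormedAddCommGroup E] [NormedSpace ℝ E]

lemma isCompact_segment (A B : E) : IsCompact (segment ℝ A B) := by
  rw [segment_eq_image_lineMap]
  exact isCompact_Icc.image lineMap_continuous

lemma subsingleton_segment_inter_of_not_both_mem_level (g : E →ₗ[ℝ] ℝ) {A B : E} {k : ℝ}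
    (hAB : ¬ (g A = k ∧ g B = k)) : (segment ℝ A B ∩ {x | g x = k}).Subsingleton := by
  rw [segment_eq_image_lineMap]
  rintro _ ⟨⟨s, -, rfl⟩, hs⟩ _ ⟨⟨s', -, rfl⟩, hs'⟩
  simp only [Set.mem_ofPred_eq, lineMap_apply_module, map_add, map_smul, smul_eq_mul] at hs hs'
  by_contra hne
  have hss' : s - s' ≠ 0 := sub_ne_zero.2 fun h ↦ hne (by rw [h])
  have hgAB : g B = g A := by
    have : (s - s') * (g B - g A) = 0 := by linear_combination hs - hs'
    linarith [(mul_eq_zero.1 this).resolve_left hss']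
  exact hAB ⟨by rw [hgAB] at hs; linarith, by rw [hgAB] at hs ⊢; linarith⟩

variable [MeasurableSpace E] [BorelSpace E]

lemma restrict_segment_hausdorffMeasure (A B : E) :
    (μH[1] : Measure E).restrict (segment ℝ A B) =
      nndist A B • (volume.restrict (Set.Icc (0 : ℝ) 1)).map (lineMap A B) := by
  have hcont : Continuous (lineMap A B : ℝ → E) := lineMap_continuous
  ext S hS
  rw [Measure.restrict_apply hS, Measure.smul_apply, Measure.map_apply hcont.measurable hS,
    Measure.restrict_apply (hcont.measurable hS), ← hausdorffMeasure_real,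
    ← hausdorffMeasure_lineMap_image, segment_eq_image_lineMap, Set.image_preimage_inter]

lemma restrict_iUnion_segment_hausdorffMeasure {ι : Type*} [Countable ι] (A B : ι → E)
    (hAB : Pairwise fun i j ↦ (segment ℝ (A i) (B i) ∩ segment ℝ (A j) (B j)).Subsingleton) :
    (μH[1] : Measure E).restrict (⋃ i, segment ℝ (A i) (B i)) =
      Measure.sum fun i ↦
        nndist (A i) (B i) • (volume.restrict (Set.Icc (0 : ℝ) 1)).map (lineMap (A i) (B i)) := by
  have := Measure.nullSingletonClass_hausdorff E one_pos
  rw [Measure.restrict_iUnion_ae (fun i j hij ↦ (hAB hij).measure_zero _)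
    fun i ↦ (isCompact_segment _ _).measurableSet.nullMeasurableSet]
  simp_rw [restrict_segment_hausdorffMeasure]

lemma integral_map_lineMap (A B : E) {f : E → ℝ} (hf : Continuous f) :
    ∫ x, f x ∂(volume.restrict (Set.Icc (0 : ℝ) 1)).map (lineMap A B) =
      ∫ s in (0 : ℝ)..1, f (lineMap A B s) := by
  rw [integral_map lineMap_continuous.aemeasurable hf.aestronglyMeasurable,
    integral_Icc_eq_integral_Ioc, intervalIntegral.integral_of_le zero_le_one]

lemma integrable_map_lineMap (A B : E) {f : E → ℝ} (hf : Continuous f) :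
    Integrable f ((volume.restrict (Set.Icc (0 : ℝ) 1)).map (lineMap A B)) := by
  rw [integrable_map_measure hf.aestronglyMeasurable lineMap_continuous.aemeasurable]
  exact (hf.comp lineMap_continuous).integrableOn_Icc

end Polygon

section Quantization

lemma exists_eq_pair_of_ncard_le_two {X : Type*} {s : Set X} (hfin : s.Finite) (hne : s.Nonempty)
    (hs : s.ncard ≤ 2) : ∃ a b, s = {a, b} := by
  have hpos := (Set.ncard_pos hfin).2 hne
  obtain h | h : s.ncard = 1 ∨ s.ncard = 2 := by lia
  · obtain ⟨a, rfl⟩ := Set.ncard_eq_one.1 h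
    exact ⟨a, a, (Set.pair_eq_singleton a).symm⟩
  · obtain ⟨a, b, -, rfl⟩ := Set.ncard_eq_two.1 h
    exact ⟨a, b, rfl⟩

lemma ncard_pair_le_two {X : Type*} (a b : X) : ({a, b} : Set X).ncard ≤ 2 :=
  (Set.ncard_insert_le a {b}).trans_eq (by rw [Set.ncard_singleton])

lemma integral_sInf_image_pair (P : Measure E2) (a b : E2) :
    ∫ x, sInf ((fun a ↦ ‖x - a‖ ^ 2) '' {a, b}) ∂P = pairDistortion P a b := by
  simp_rw [Set.image_pair, csInf_pair, pairDistortion]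

lemma quantErr_two_eq_pairDistortion {P : Measure E2} {a b : E2}
    (hmin : ∀ a' b', pairDistortion P a b ≤ pairDistortion P a' b') :
    quantErr P 2 = pairDistortion P a b := by
  refine IsLeast.csInf_eq ⟨⟨{a, b}, Set.toFinite _, Set.insert_nonempty _ _, ncard_pair_le_two _ _,
    (integral_sInf_image_pair P a b).symm⟩, ?_⟩
  rintro _ ⟨α, hfin, hne, hcard, rfl⟩
  obtain ⟨a', b', rfl⟩ := exists_eq_pair_of_ncard_le_two hfin hne hcard
  exact (hmin a' b').trans_eq (integral_sInf_image_pair P a' b').symm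

lemma isOptimalSet_two_pair {P : Measure E2} {a b : E2}
    (hmin : ∀ a' b', pairDistortion P a b ≤ pairDistortion P a' b') :
    IsOptimalSet P 2 {a, b} :=
  ⟨Set.toFinite _, Set.insert_nonempty _ _, ncard_pair_le_two _ _,
    (integral_sInf_image_pair P a b).trans (quantErr_two_eq_pairDistortion hmin).symm⟩

end Quantization

section TruncatedMean

open AffineMap

lemma integral_comp_lineMap_le_of_convexOn {f : ℝ → ℝ} (hconv : ConvexOn ℝ Set.univ f)
    (hcont : Continuous f) (A B : ℝ) :
    ∫ s in (0 : ℝ)..1, f (lineMap A B s) ≤ (f A + f B) / 2 := by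
  have hchord : ∫ s in (0 : ℝ)..1, f (lineMap A B s) ≤ ∫ s in (0 : ℝ)..1, ((f B - f A) * s + f A) :=
    intervalIntegral.integral_mono_on zero_le_one
      ((hcont.comp lineMap_continuous).intervalIntegrable _ _)
      (Continuous.intervalIntegrable (by fun_prop) _ _) fun s hs ↦ by
        have := hconv.2 (Set.mem_univ A) (Set.mem_univ B) (sub_nonneg.2 hs.2) hs.1 (by ring)
        rw [lineMap_apply_module]
        simp only [smul_eq_mul] at this ⊢
        linarith
  refine hchord.trans_eq ?_
  rw [intervalIntegral.integral_add (Continuous.intervalIntegrable (by fun_prop) _ _) (by simp),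
    intervalIntegral.integral_const_mul, integral_id]
  norm_num
  ring

/-- The average over the oriented segment from `A` to `B` of `max |x| t`, the absolute value
truncated from below at the level `t`. -/
def truncAbsMean (t A B : ℝ) : ℝ := ∫ s in (0 : ℝ)..1, max |lineMap A B s| t

variable {t A B u v p q x : ℝ}

lemma truncAbsMean_nonneg (ht : 0 ≤ t) : 0 ≤ truncAbsMean t A B :=
  intervalIntegral.integral_nonneg zero_le_one fun _ _ ↦ ht.trans (le_max_right _ _)

lemma truncAbsMean_comm (t A B : ℝ) : truncAbsMean t A B = truncAbsMean t B A := by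
  have := intervalIntegral.integral_comp_sub_left (a := 0) (b := 1)
    (fun s : ℝ ↦ max |lineMap B A s| t) 1
  simpa only [truncAbsMean, lineMap_apply_one_sub, sub_self, sub_zero] using this

lemma truncAbsMean_neg (t A B : ℝ) : truncAbsMean t (-A) (-B) = truncAbsMean t A B := by
  simp only [truncAbsMean, lineMap_apply_module, smul_neg, ← neg_add, abs_neg]

lemma truncAbsMean_le (t A B : ℝ) : truncAbsMean t A B ≤ (max |A| t + max |B| t) / 2 :=
  integral_comp_lineMap_le_of_convexOn (f := fun x ↦ max |x| t)
    ((convexOn_norm convex_univ).sup (convexOn_const t convex_univ)) (by fun_prop) A B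

lemma truncAbsMean_of_le (ht : 0 ≤ t) (hA : t ≤ A) (hB : t ≤ B) :
    truncAbsMean t A B = (A + B) / 2 := by
  have hlinear : truncAbsMean t A B = ∫ s in (0 : ℝ)..1, ((B - A) * s + A) := by
    refine intervalIntegral.integral_congr fun s hs ↦ ?_
    rw [Set.uIcc_of_le zero_le_one] at hs
    have hmem : t ≤ lineMap A B s := by
      rw [lineMap_apply_module, smul_eq_mul, smul_eq_mul]
      nlinarith [hs.1, hs.2]
    rw [abs_of_nonneg (ht.trans hmem), max_eq_left hmem, lineMap_apply_ring']
    ring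
  rw [hlinear, intervalIntegral.integral_add (Continuous.intervalIntegrable (by fun_prop) _ _)
    (by simp), intervalIntegral.integral_const_mul, integral_id]
  norm_num
  ring

lemma mul_truncAbsMean (t A B : ℝ) :
    (B - A) * truncAbsMean t A B = ∫ x in A..B, max |x| t := by
  have := intervalIntegral.mul_integral_comp_add_mul (a := 0) (b := 1)
    (f := fun x : ℝ ↦ max |x| t) (B - A) A
  simp only [mul_zero, add_zero, mul_one, add_sub_cancel] at this
  simp only [← this, truncAbsMean, lineMap_apply_ring', mul_comm, add_comm]

lemma integral_zero_max_abs_of_le (hx : 0 ≤ x) (hxt : x ≤ t) :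
    ∫ y in (0 : ℝ)..x, max |y| t = t * x := by
  have hconst : ∫ y in (0 : ℝ)..x, max |y| t = ∫ _ in (0 : ℝ)..x, t := by
    refine intervalIntegral.integral_congr fun y hy ↦ max_eq_right ?_
    rw [Set.uIcc_of_le hx] at hy
    exact (abs_of_nonneg hy.1).trans_le (hy.2.trans hxt)
  rw [hconst, intervalIntegral.integral_const, sub_zero, smul_eq_mul, mul_comm]

lemma integral_zero_max_abs (ht : 0 ≤ t) (hx : 0 ≤ x) :
    ∫ y in (0 : ℝ)..x, max |y| t = (x ^ 2 + t ^ 2 - max (t - x) 0 ^ 2) / 2 := by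
  rcases le_total x t with hxt | htx
  · rw [integral_zero_max_abs_of_le hx hxt, max_eq_left (by linarith)]
    ring
  have hcont : Continuous fun y : ℝ ↦ max |y| t := by fun_prop
  have hid : ∫ y in t..x, max |y| t = ∫ y in t..x, y := by
    refine intervalIntegral.integral_congr fun y hy ↦ ?_
    rw [Set.uIcc_of_le htx] at hy
    rw [abs_of_nonneg (ht.trans hy.1), max_eq_left hy.1]
  rw [← intervalIntegral.integral_add_adjacent_intervals (hcont.intervalIntegrable 0 t)
    (hcont.intervalIntegrable t x), integral_zero_max_abs_of_le ht le_rfl, hid, integral_id,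
    max_eq_right (by linarith)]
  ring

lemma integral_max_abs (ht : 0 ≤ t) (hA : 0 ≤ A) (hB : 0 ≤ B) :
    ∫ y in A..B, max |y| t =
      (B ^ 2 - max (t - B) 0 ^ 2) / 2 - (A ^ 2 - max (t - A) 0 ^ 2) / 2 := by
  have hcont : Continuous fun y : ℝ ↦ max |y| t := by fun_prop
  rw [← intervalIntegral.integral_interval_sub_left (hcont.intervalIntegrable 0 B)
    (hcont.intervalIntegrable 0 A), integral_zero_max_abs ht hA, integral_zero_max_abs ht hB]
  ring

lemma integral_neg_max_abs (ht : 0 ≤ t) (hA : 0 ≤ A) (hB : 0 ≤ B) :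
    ∫ y in (-A)..B, max |y| t =
      (A ^ 2 + t ^ 2 - max (t - A) 0 ^ 2) / 2 + (B ^ 2 + t ^ 2 - max (t - B) 0 ^ 2) / 2 := by
  have hcont : Continuous fun y : ℝ ↦ max |y| t := by fun_prop
  have hreflect : ∫ y in (-A)..0, max |y| t = ∫ y in (0 : ℝ)..A, max |y| t := by
    simpa using (intervalIntegral.integral_comp_neg (a := 0) (b := A) fun y : ℝ ↦ max |y| t).symm
  rw [← intervalIntegral.integral_add_adjacent_intervals (hcont.intervalIntegrable (-A) 0)
    (hcont.intervalIntegrable 0 B), hreflect, integral_zero_max_abs ht hA,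
    integral_zero_max_abs ht hB]

/-- Three times the mean of `max |⟪x, e⟫| t` over the boundary of a centrally symmetric hexagon,
when `p, p + q, q, -p, -(p + q), -q` are the inner products of the successive vertices with `e`. -/
def hexTruncMean (t p q : ℝ) : ℝ :=
  truncAbsMean t p (p + q) + truncAbsMean t (p + q) q + truncAbsMean t q (-p)

lemma hexTruncMean_nonneg (ht : 0 ≤ t) : 0 ≤ hexTruncMean t p q :=
  add_nonneg (add_nonneg (truncAbsMean_nonneg ht) (truncAbsMean_nonneg ht)) (truncAbsMean_nonneg ht)

lemma hexTruncMean_comm (t p q : ℝ) : hexTruncMean t p q = hexTruncMean t q p := by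
  have hcross : truncAbsMean t q (-p) = truncAbsMean t p (-q) := by
    rw [truncAbsMean_comm, ← truncAbsMean_neg, neg_neg]
  rw [hexTruncMean, hexTruncMean, hcross, add_comm q p, truncAbsMean_comm t p,
    truncAbsMean_comm t _ q]
  ring

lemma hexTruncMean_neg (t p q : ℝ) : hexTruncMean t (-p) (-q) = hexTruncMean t p q := by
  simp only [hexTruncMean, ← neg_add, truncAbsMean_neg]

lemma hexTruncMean_rotate (t p q : ℝ) : hexTruncMean t (-q) (p + q) = hexTruncMean t p q := by
  have hcross : truncAbsMean t (-q) p = truncAbsMean t q (-p) := by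
    rw [← truncAbsMean_neg, neg_neg]
  rw [hexTruncMean, hexTruncMean, neg_neg, show -q + (p + q) = p by ring, hcross]
  ring

lemma hexTruncMean_eq_of_le (ht : 0 ≤ t) (hu : 0 < u) (hv : 0 ≤ v) (htu : t ≤ u) :
    hexTruncMean t u v = (u ^ 2 + v ^ 2) / (2 * (u + v)) + 3 * (u + v) / 2 +
      (t ^ 2 + max (t - v) 0 ^ 2 * v / (2 * u)) / (u + v) := by
  have huv : 0 < u + v := by linarith
  have hcross : (u + v) * truncAbsMean t v (-u) =
      (u ^ 2 + t ^ 2) / 2 + (v ^ 2 + t ^ 2 - max (t - v) 0 ^ 2) / 2 := by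
    have := mul_truncAbsMean t (-u) v
    rw [integral_neg_max_abs ht hu.le hv, max_eq_right (by linarith : t - u ≤ 0)] at this
    rw [truncAbsMean_comm]
    linarith
  have hshort : u * truncAbsMean t (u + v) v =
      (u + v) ^ 2 / 2 - (v ^ 2 - max (t - v) 0 ^ 2) / 2 := by
    have := mul_truncAbsMean t v (u + v)
    rw [integral_max_abs ht hv huv.le, max_eq_right (by linarith : t - (u + v) ≤ 0)] at this
    rw [truncAbsMean_comm]
    linarith
  rw [hexTruncMean, truncAbsMean_of_le ht htu (by linarith),
    eq_div_of_mul_eq huv.ne' ((mul_comm _ _).trans hcross),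
    eq_div_of_mul_eq hu.ne' ((mul_comm _ _).trans hshort)]
  field_simp
  ring

lemma hexTruncMean_le_of_le (ht : 0 ≤ t) (hv : 0 ≤ v) (hvu : v ≤ u)
    (h : u ^ 2 + u * v + v ^ 2 = 3 / 4) (htu : t ≤ u) :
    hexTruncMean t u v ≤ 7 / 4 + 12 / 7 * t ^ 2 := by
  have hu : 0 < u := by nlinarith
  have huv : 6 / 7 ≤ u + v := by nlinarith
  have huv_le : u + v ≤ 1 := by nlinarith
  have habs : (u ^ 2 + v ^ 2) / (2 * (u + v)) ≤ 7 / 4 - 3 * (u + v) / 2 := by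
    rw [div_le_iff₀ (by linarith)]
    nlinarith
  have hdefect : max (t - v) 0 ^ 2 * v / (2 * u) ≤ t ^ 2 / 8 := by
    rw [div_le_iff₀ (by linarith)]
    rcases max_cases (t - v) 0 with ⟨hd, hvt⟩ | ⟨hd, -⟩ <;> rw [hd]
    · have hprod : (t - v) * v ≤ t ^ 2 / 4 := by nlinarith [sq_nonneg (t - 2 * v)]
      nlinarith [mul_le_mul hprod (by linarith : t - v ≤ u) hvt (by positivity)]
    · nlinarith [mul_nonneg (sq_nonneg t) hu.le]
  have htrunc : (t ^ 2 + max (t - v) 0 ^ 2 * v / (2 * u)) / (u + v) ≤ 12 / 7 * t ^ 2 := by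
    rw [div_le_iff₀ (by linarith)]
    nlinarith [sq_nonneg t]
  rw [hexTruncMean_eq_of_le ht hu hv htu]
  linarith

lemma hexTruncMean_le_of_ge_of_le (hv : 0 ≤ v) (hvu : v ≤ u)
    (h : u ^ 2 + u * v + v ^ 2 = 3 / 4) (hut : u ≤ t) (htuv : t ≤ u + v) :
    hexTruncMean t u v ≤ 7 / 4 + 12 / 7 * t ^ 2 := by
  have huv_le : u + v ≤ 1 := by nlinarith
  have hlong := truncAbsMean_le t u (u + v)
  have hshort := truncAbsMean_le t (u + v) v
  have hcross := truncAbsMean_le t v (-u)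
  rw [abs_neg] at hcross
  rw [abs_of_nonneg (hv.trans hvu), max_eq_right hut] at hlong hcross
  rw [abs_of_nonneg (by linarith : 0 ≤ u + v), max_eq_left htuv] at hlong hshort
  rw [abs_of_nonneg hv, max_eq_right (hvu.trans hut)] at hshort hcross
  rw [hexTruncMean]
  nlinarith [sq_nonneg (t - 7 / 12)]

lemma hexTruncMean_le_of_add_le (hu : 0 ≤ u) (hv : 0 ≤ v) (huvt : u + v ≤ t) :
    hexTruncMean t u v ≤ 3 * t := by
  have hlong := truncAbsMean_le t u (u + v)
  have hshort := truncAbsMean_le t (u + v) v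
  have hcross := truncAbsMean_le t v (-u)
  rw [abs_neg] at hcross
  rw [abs_of_nonneg hu, max_eq_right (by linarith : u ≤ t)] at hlong hcross
  rw [abs_of_nonneg (add_nonneg hu hv), max_eq_right huvt] at hlong hshort
  rw [abs_of_nonneg hv, max_eq_right (by linarith : v ≤ t)] at hshort hcross
  rw [hexTruncMean]
  linarith

lemma hexTruncMean_sq_le_of_nonneg (ht : 0 ≤ t) (hu : 0 ≤ u) (hv : 0 ≤ v)
    (h : u ^ 2 + u * v + v ^ 2 = 3 / 4) :
    (hexTruncMean t u v / 3) ^ 2 ≤ t ^ 2 + 49 / 144 := by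
  wlog hvu : v ≤ u generalizing u v
  · rw [hexTruncMean_comm]
    exact this hv hu (by linarith) (le_of_not_ge hvu)
  have hnonneg : 0 ≤ hexTruncMean t u v / 3 := div_nonneg (hexTruncMean_nonneg ht) zero_le_three
  rcases le_total (u + v) t with huvt | htuv
  · have hle : hexTruncMean t u v / 3 ≤ t := by linarith [hexTruncMean_le_of_add_le hu hv huvt]
    linarith [pow_le_pow_left₀ hnonneg hle 2]
  have hle : hexTruncMean t u v / 3 ≤ 7 / 12 + 4 / 7 * t ^ 2 := by
    rcases le_total t u with htu | hut
    · linarith [hexTruncMean_le_of_le ht hv hvu h htu]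
    · linarith [hexTruncMean_le_of_ge_of_le hv hvu h hut htuv]
  have ht_le : t ^ 2 ≤ 1 := by nlinarith
  -- `(7/12 + 4/7 t²)² = 49/144 + 2/3 t² + 16/49 t⁴`, and `2/3 + 16/49 < 1`.
  nlinarith [pow_le_pow_left₀ hnonneg hle 2, sq_nonneg t]

lemma hexTruncMean_sq_le (ht : 0 ≤ t) (h : p ^ 2 + p * q + q ^ 2 = 3 / 4) :
    (hexTruncMean t p q / 3) ^ 2 ≤ t ^ 2 + 49 / 144 := by
  wlog hadd : 0 ≤ p + q generalizing p q
  · rw [← hexTruncMean_neg]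
    exact this (by linarith) (by linarith)
  wlog hqp : q ≤ p generalizing p q
  · rw [hexTruncMean_comm]
    exact this (by linarith) (by linarith) (le_of_not_ge hqp)
  rcases le_total 0 q with hq | hq
  · exact hexTruncMean_sq_le_of_nonneg ht (by linarith) hq h
  · rw [← hexTruncMean_rotate]
    exact hexTruncMean_sq_le_of_nonneg ht (by linarith) hadd (by linarith)

lemma hexTruncMean_zero_half_half : hexTruncMean 0 (1 / 2) (1 / 2) = 7 / 4 := by
  rw [hexTruncMean_eq_of_le le_rfl (by norm_num) (by norm_num) (by norm_num)]
  norm_num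

end TruncatedMean

section Hexagon

open AffineMap

lemma pt_apply_zero (a b : ℝ) : pt a b 0 = a := rfl

lemma pt_apply_one (a b : ℝ) : pt a b 1 = b := rfl

lemma pt_add_pt (a b a' b' : ℝ) : pt a b + pt a' b' = pt (a + a') (b + b') := by
  ext i; fin_cases i <;> rfl

lemma neg_pt (a b : ℝ) : -pt a b = pt (-a) (-b) := by
  ext i; fin_cases i <;> rfl

lemma smul_pt (r a b : ℝ) : r • pt a b = pt (r * a) (r * b) := by
  ext i; fin_cases i <;> rfl

lemma inner_pt (a b : ℝ) (e : E2) : ⟪pt a b, e⟫ = a * e 0 + b * e 1 := by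
  simp [PiLp.inner_apply, pt_apply_zero, pt_apply_one, mul_comm]

/-- The center of the hexagon. -/
def hexCenter : E2 := pt (1 / 2) (√3 / 2)

/-- The vectors from the center of the hexagon to its vertices `O, A₁, …, A₅`, in this order. -/
def hexSpoke : Fin 6 → E2 :=
  ![pt (-(1 / 2)) (-(√3 / 2)), pt (1 / 2) (-(√3 / 2)), pt 1 0, pt (1 / 2) (√3 / 2),
    pt (-(1 / 2)) (√3 / 2), pt (-1) 0]

/-- The vertices `O, A₁, …, A₅` of the hexagon; indices are read modulo `6`. -/
def hexVertex (k : Fin 6) : E2 := hexCenter + hexSpoke k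

lemma hexVertex_eq : hexVertex = ![pt 0 0, pt 1 0, pt (3 / 2) (√3 / 2), pt 1 √3, pt 0 √3,
    pt (-(1 / 2)) (√3 / 2)] := by
  funext k
  fin_cases k <;> simp [hexVertex, hexCenter, hexSpoke, pt_add_pt] <;> norm_num

lemma hexL_eq_iUnion : hexL = ⋃ k, segment ℝ (hexVertex k) (hexVertex (k + 1)) := by
  ext x
  simp [hexL, Fin.exists_fin_succ, hexVertex_eq, or_assoc]

lemma hexSpoke_add_three (k : Fin 6) : hexSpoke (k + 3) = -hexSpoke k := by
  fin_cases k <;> simp [hexSpoke, neg_pt]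

lemma hexSpoke_one : hexSpoke 1 = hexSpoke 0 + hexSpoke 2 := by
  simp only [hexSpoke, Matrix.cons_val, pt_add_pt]
  norm_num

lemma inner_hexSpoke (i j : Fin 6) :
    ⟪hexSpoke i, hexSpoke j⟫ = ![1, 1 / 2, -(1 / 2), -1, -(1 / 2), 1 / 2] (i - j) := by
  have hsqrt : √3 * √3 = 3 := Real.mul_self_sqrt zero_le_three
  fin_cases i <;> fin_cases j <;>
    simp [-inner_self_eq_norm_sq_to_K, hexSpoke, inner_pt, pt_apply_zero, pt_apply_one] <;> linarith

lemma norm_hexSpoke (k : Fin 6) : ‖hexSpoke k‖ = 1 := by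
  have hinner := inner_hexSpoke k k
  rw [real_inner_self_eq_norm_sq, sub_self, Matrix.cons_val_zero] at hinner
  exact (pow_eq_one_iff_of_nonneg (norm_nonneg _) two_ne_zero).1 hinner

lemma inner_hexSpoke_add_one (k : Fin 6) : ⟪hexSpoke k, hexSpoke (k + 1)⟫ = 1 / 2 := by
  rw [inner_hexSpoke, sub_add_cancel_left]
  simp

lemma nndist_hexVertex_add_one (k : Fin 6) : nndist (hexVertex k) (hexVertex (k + 1)) = 1 := by
  rw [← NNReal.coe_inj, coe_nndist, hexVertex, hexVertex, dist_add_left, dist_eq_norm,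
    NNReal.coe_one, ← pow_eq_one_iff_of_nonneg (norm_nonneg _) two_ne_zero, norm_sub_sq_real,
    norm_hexSpoke, norm_hexSpoke, inner_hexSpoke_add_one]
  norm_num

lemma inner_hexSpoke_add_hexSpoke_eq_iff (i j : Fin 6) :
    ⟪hexSpoke j + hexSpoke (j + 1), hexSpoke i⟫ = 3 / 2 ↔ i = j ∨ i = j + 1 := by
  obtain ⟨d, rfl⟩ : ∃ d, i = j + d := ⟨i - j, (add_sub_cancel j i).symm⟩
  rw [inner_add_left, inner_hexSpoke, inner_hexSpoke, sub_add_cancel_left,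
    add_sub_add_left_eq_sub, add_eq_left, add_right_inj]
  fin_cases d <;> simp <;> norm_num

lemma pairwise_subsingleton_hexagon_side_inter :
    Pairwise fun i j ↦ (segment ℝ (hexVertex i) (hexVertex (i + 1)) ∩
      segment ℝ (hexVertex j) (hexVertex (j + 1))).Subsingleton := by
  intro i j hij
  have hnot_both : ∀ i j : Fin 6, i ≠ j →
      ¬ ((i = j ∨ i = j + 1) ∧ (i + 1 = j ∨ i + 1 = j + 1)) := by decide
  set g := innerₛₗ ℝ (hexSpoke j + hexSpoke (j + 1))
  have hlevel : ∀ k, g (hexVertex k) = g hexCenter + 3 / 2 ↔ k = j ∨ k = j + 1 := fun k ↦ by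
    rw [hexVertex, map_add, add_right_inj]
    exact inner_hexSpoke_add_hexSpoke_eq_iff k j
  have hside : segment ℝ (hexVertex j) (hexVertex (j + 1)) ⊆ {x | g x = g hexCenter + 3 / 2} :=
    (convex_hyperplane g.isLinear _).segment_subset ((hlevel j).2 (.inl rfl))
      ((hlevel (j + 1)).2 (.inr rfl))
  refine (subsingleton_segment_inter_of_not_both_mem_level g ?_).anti
    (Set.inter_subset_inter_right _ hside)
  rw [hlevel, hlevel]
  exact hnot_both i j hij

lemma hexP_eq_sum : hexP = (6 : ℝ≥0∞)⁻¹ • Measure.sum fun k ↦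
    (volume.restrict (Set.Icc (0 : ℝ) 1)).map (lineMap (hexVertex k) (hexVertex (k + 1))) := by
  rw [hexP, hexL_eq_iUnion,
    restrict_iUnion_segment_hausdorffMeasure _ _ pairwise_subsingleton_hexagon_side_inter]
  simp_rw [nndist_hexVertex_add_one, one_smul]

lemma integral_hexP {f : E2 → ℝ} (hf : Continuous f) :
    ∫ x, f x ∂hexP =
      1 / 6 * ∑ k, ∫ s in (0 : ℝ)..1, f (lineMap (hexVertex k) (hexVertex (k + 1)) s) := by
  rw [hexP_eq_sum, integral_smul_measure, Measure.sum_fintype,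
    integral_finsetSum_measure fun k _ ↦ integrable_map_lineMap _ _ hf]
  simp [integral_map_lineMap _ _ hf]

instance isProbabilityMeasure_hexP : IsProbabilityMeasure hexP := by
  refine ⟨?_⟩
  rw [hexP_eq_sum, Measure.sum_fintype]
  simp [Measure.map_apply lineMap_continuous.measurable, ENNReal.inv_mul_cancel]

lemma isCompact_hexL : IsCompact hexL := by
  rw [hexL_eq_iUnion]
  exact isCompact_iUnion fun _ ↦ isCompact_segment _ _

lemma memLp_id_hexP : MemLp id 2 hexP := by
  obtain ⟨C, hC⟩ := isCompact_hexL.isBounded.exists_norm_le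
  refine MemLp.of_bound aestronglyMeasurable_id C (Measure.ae_smul_measure ?_ _)
  exact ae_restrict_of_forall_mem isCompact_hexL.measurableSet hC

lemma pointReflection_hexVertex (k : Fin 6) :
    AffineIsometryEquiv.pointReflection ℝ hexCenter (hexVertex k) = hexVertex (k + 3) := by
  rw [AffineIsometryEquiv.pointReflection_apply, vsub_eq_sub, vadd_eq_add, hexVertex, hexVertex,
    hexSpoke_add_three]
  abel

lemma pointReflection_mem_hexL {x : E2} (hx : x ∈ hexL) :
    AffineIsometryEquiv.pointReflection ℝ hexCenter x ∈ hexL := by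
  rw [hexL_eq_iUnion] at hx ⊢
  obtain ⟨k, hk⟩ := Set.mem_iUnion.1 hx
  refine Set.mem_iUnion.2 ⟨k + 3, ?_⟩
  have himage := image_segment ℝ
    (AffineIsometryEquiv.pointReflection ℝ hexCenter).toAffineEquiv.toAffineMap
    (hexVertex k) (hexVertex (k + 1))
  rw [add_right_comm, ← pointReflection_hexVertex, ← pointReflection_hexVertex]
  exact himage ▸ Set.mem_image_of_mem _ hk

lemma preimage_pointReflection_hexL :
    AffineIsometryEquiv.pointReflection ℝ hexCenter ⁻¹' hexL = hexL := by
  refine Set.Subset.antisymm (fun x hx ↦ ?_) fun _ ↦ pointReflection_mem_hexL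
  have hinvol : AffineIsometryEquiv.pointReflection ℝ hexCenter
      (AffineIsometryEquiv.pointReflection ℝ hexCenter x) = x :=
    AffineIsometryEquiv.pointReflection_involutive hexCenter x
  exact hinvol ▸ pointReflection_mem_hexL hx

lemma measurePreserving_pointReflection_hexP :
    MeasurePreserving (AffineIsometryEquiv.pointReflection ℝ hexCenter) hexP hexP := by
  have h := (IsometryEquiv.measurePreserving_hausdorffMeasure
    (AffineIsometryEquiv.pointReflection ℝ hexCenter).toIsometryEquiv 1).restrict_preimage
    isCompact_hexL.measurableSet
  rw [AffineIsometryEquiv.coe_toIsometryEquiv, preimage_pointReflection_hexL] at h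
  exact h.smul_measure _

lemma lineMap_hexVertex_sub_hexCenter (i j : Fin 6) (s : ℝ) :
    lineMap (hexVertex i) (hexVertex j) s - hexCenter = lineMap (hexSpoke i) (hexSpoke j) s := by
  simp only [hexVertex, lineMap_apply_module]
  module

lemma norm_lineMap_hexSpoke_sq (k : Fin 6) (s : ℝ) :
    ‖lineMap (hexSpoke k) (hexSpoke (k + 1)) s‖ ^ 2 = 1 - s + s ^ 2 := by
  rw [lineMap_apply_module, norm_add_sq_real, norm_smul, norm_smul, real_inner_smul_left,
    real_inner_smul_right, norm_hexSpoke, norm_hexSpoke, inner_hexSpoke_add_one, mul_one, mul_one,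
    Real.norm_eq_abs, Real.norm_eq_abs, sq_abs, sq_abs]
  ring

lemma integral_norm_sub_hexCenter_sq : ∫ x, ‖x - hexCenter‖ ^ 2 ∂hexP = 5 / 6 := by
  have hside : ∫ s in (0 : ℝ)..1, (1 - s + s ^ 2) = 5 / 6 := by
    rw [intervalIntegral.integral_add (Continuous.intervalIntegrable (by fun_prop) _ _) (by simp),
      intervalIntegral.integral_sub (by simp) (by simp)]
    norm_num
  rw [integral_hexP (by fun_prop)]
  simp_rw [lineMap_hexVertex_sub_hexCenter, norm_lineMap_hexSpoke_sq, hside]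
  norm_num

lemma integral_max_abs_inner_hexP (e : E2) (t : ℝ) :
    ∫ x, max |⟪x - hexCenter, e⟫| t ∂hexP =
      hexTruncMean t ⟪hexSpoke 0, e⟫ ⟪hexSpoke 2, e⟫ / 3 := by
  have hside : ∀ k, ∫ s in (0 : ℝ)..1,
      max |⟪lineMap (hexVertex k) (hexVertex (k + 1)) s - hexCenter, e⟫| t =
        truncAbsMean t ⟪hexSpoke k, e⟫ ⟪hexSpoke (k + 1), e⟫ := fun k ↦ by
    simp_rw [lineMap_hexVertex_sub_hexCenter, truncAbsMean, lineMap_apply_module, inner_add_left,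
      real_inner_smul_left, smul_eq_mul]
  have hopposite : ∀ k, ⟪hexSpoke (k + 3), e⟫ = -⟪hexSpoke k, e⟫ := fun k ↦ by
    rw [hexSpoke_add_three, inner_neg_left]
  have hspoke_one : ⟪hexSpoke 1, e⟫ = ⟪hexSpoke 0, e⟫ + ⟪hexSpoke 2, e⟫ := by
    rw [hexSpoke_one, inner_add_left]
  rw [integral_hexP (by fun_prop)]
  simp_rw [hside]
  rw [Fin.sum_univ_six]
  have hspoke_three : ⟪hexSpoke 3, e⟫ = _ := hopposite 0
  have hspoke_four : ⟪hexSpoke 4, e⟫ = _ := hopposite 1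
  have hspoke_five : ⟪hexSpoke 5, e⟫ = _ := hopposite 2
  simp only [Fin.reduceAdd, zero_add, hspoke_three, hspoke_four, hspoke_five, truncAbsMean_neg,
    hspoke_one, hexTruncMean]
  rw [← truncAbsMean_neg t (-⟪hexSpoke 2, e⟫), neg_neg]
  ring

lemma inner_hexSpoke_quadratic_form (e : E2) :
    ⟪hexSpoke 0, e⟫ ^ 2 + ⟪hexSpoke 0, e⟫ * ⟪hexSpoke 2, e⟫ + ⟪hexSpoke 2, e⟫ ^ 2 =
      3 / 4 * ‖e‖ ^ 2 := by
  have hsqrt : √3 ^ 2 = 3 := Real.sq_sqrt zero_le_three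
  simp only [hexSpoke, Matrix.cons_val, inner_pt, EuclideanSpace.real_norm_sq_eq, Fin.sum_univ_two]
  linear_combination (e 1) ^ 2 / 4 * hsqrt

lemma le_pairDistortion_hexP (a b : E2) : 71 / 144 ≤ pairDistortion hexP a b := by
  have h := integral_norm_sub_sq_sub_le_pairDistortion memLp_id_hexP
    measurePreserving_pointReflection_hexP (K := 49 / 144) (fun e he t ht ↦ ?_) a b
  · rw [integral_norm_sub_hexCenter_sq] at h
    linarith
  · rw [integral_max_abs_inner_hexP]
    exact hexTruncMean_sq_le ht (by rw [inner_hexSpoke_quadratic_form, he]; norm_num)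

lemma pairDistortion_hexP_eq :
    pairDistortion hexP (pt (13 / 12) (√3 / 2)) (pt (-(1 / 12)) (√3 / 2)) = 71 / 144 := by
  have hmean : ∫ x, max |⟪x - hexCenter, hexSpoke 2⟫| 0 ∂hexP = 7 / 12 := by
    have hrotate := hexTruncMean_rotate 0 (1 / 2) (1 / 2)
    rw [hexTruncMean_zero_half_half, add_halves] at hrotate
    rw [integral_max_abs_inner_hexP, inner_hexSpoke, inner_hexSpoke, sub_self,
      show (0 - 2 : Fin 6) = 4 from rfl]
    simp only [Matrix.cons_val]
    rw [hrotate]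
    norm_num
  have hright : pt (13 / 12) (√3 / 2) = hexCenter + 0 + (7 / 12 : ℝ) • hexSpoke 2 := by
    simp only [hexCenter, hexSpoke, Matrix.cons_val, smul_pt, add_zero, pt_add_pt]
    norm_num
  have hleft : pt (-(1 / 12)) (√3 / 2) = hexCenter + 0 - (7 / 12 : ℝ) • hexSpoke 2 := by
    simp only [hexCenter, hexSpoke, Matrix.cons_val, smul_pt, add_zero, sub_eq_add_neg, neg_pt,
      pt_add_pt]
    norm_num
  rw [hright, hleft, pairDistortion_add_smul_sub_smul_eq memLp_id_hexP
    measurePreserving_pointReflection_hexP 0 (by norm_num) (norm_hexSpoke 2),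
    integral_norm_sub_hexCenter_sq, inner_zero_left, abs_zero, hmean]
  norm_num

end Hexagon

/-- The set `{(13/12, √3/2), (-1/12, √3/2)}` forms an optimal set of two-means
for the uniform distribution on the hexagon boundary, and `V₂ = 71/144`. -/
theorem stmt_2 :
    IsOptimalSet hexP 2
      {pt (13/12) (Real.sqrt 3 / 2), pt (-(1/12)) (Real.sqrt 3 / 2)} ∧
    quantErr hexP 2 = 71 / 144 := by
  have hmin : ∀ a b : E2, pairDistortion hexP (pt (13 / 12) (√3 / 2)) (pt (-(1 / 12)) (√3 / 2)) ≤
      pairDistortion hexP a b := fun a b ↦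
    pairDistortion_hexP_eq.trans_le (le_pairDistortion_hexP a b)
  exact ⟨isOptimalSet_two_pair hmin,
    (quantErr_two_eq_pairDistortion hmin).trans pairDistortion_hexP_eq⟩
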